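/- arXiv:2601.07427 — 3 statements merged into one kernel-verified Lean document; each statement's English description precedes it below -/
import Mathlib

section
/- The B(G)-SSW is fully decomposable with respect to the cuts of G: let G = (V, E) be a finite connected simple graph with nonempty edge set and define, on the total space, W_{B(G)} = −⊗_{e∈E} Φ_e + Σ_{K ∈ B(G), K ≠ ∅} ( ⊗_{e∈K} (I_e − Φ_e)/(d−1) ⊗ ⊗_{e∉K} Φ_e ). Then for every nonempty K ∈ B(G) there exists a positive semidefinite matrix Q on the total space with Q^{Γ_K} ⪯ W_{B(G)}. -/
open Matrix Finset
open scoped ComplexOrder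

/-- The projector onto the maximally entangled state on `ℂ^d ⊗ ℂ^d`. -/
noncomputable def phiM (d : ℕ) : Matrix (Fin d × Fin d) (Fin d × Fin d) ℂ :=
  Matrix.of fun p q => if p.1 = p.2 ∧ q.1 = q.2 then (1 : ℂ) / d else 0

/-- `Γ_K`: partial transpose of the first `ℂ^d` factor of every edge in `K`. -/
def ptK (d : ℕ) (E : Type*) [DecidableEq E] (K : Finset E)
    (M : Matrix (E → Fin d × Fin d) (E → Fin d × Fin d) ℂ) :
    Matrix (E → Fin d × Fin d) (E → Fin d × Fin d) ℂ :=
  Matrix.of fun x y =>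
    M (fun e => if e ∈ K then ((y e).1, (x e).2) else x e)
      (fun e => if e ∈ K then ((x e).1, (y e).2) else y e)

/-- The edge boundary `∂S` of a vertex subset `S`, as a finite set of edges of `G`
(the edges with exactly one endpoint in `S`). -/
def bdE {V : Type*} [Fintype V] [DecidableEq V] (G : SimpleGraph V) [DecidableRel G.Adj]
    (S : Finset V) : Finset ↥G.edgeSet :=
  Finset.univ.filter (fun e => (S.filter (fun v => v ∈ e.val)).card = 1)

/-- The cut space `B(G)`: the collection of all edge boundaries `∂S` for `S ⊆ V`. -/
def cutSpace {V : Type*} [Fintype V] [DecidableEq V] (G : SimpleGraph V)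
    [DecidableRel G.Adj] : Finset (Finset ↥G.edgeSet) :=
  Finset.univ.filter (fun K => ∃ S : Finset V, K = bdE G S)

/-- The `B(G)`-SSW:
`W_{B(G)} = −⊗_{e∈E} Φ_e + Σ_{∅ ≠ K ∈ B(G)} (⊗_{e∈K} (I_e − Φ_e)/(d−1) ⊗ ⊗_{e∉K} Φ_e)`. -/
noncomputable def WBG (d : ℕ) {V : Type*} [Fintype V] [DecidableEq V] (G : SimpleGraph V)
    [DecidableRel G.Adj] :
    Matrix (↥G.edgeSet → Fin d × Fin d) (↥G.edgeSet → Fin d × Fin d) ℂ :=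
  (-1 : ℂ) • Matrix.of (fun x y => ∏ e, phiM d (x e) (y e))
    + ∑ K ∈ (cutSpace G).filter (fun K => K.Nonempty),
        Matrix.of (fun x y => ∏ e,
          if e ∈ K then ((1 : Matrix (Fin d × Fin d) (Fin d × Fin d) ℂ) - phiM d) (x e) (y e)
              / ((d : ℂ) - 1)
          else phiM d (x e) (y e))

/-- swap matrix -/
def swF (d : ℕ) : Matrix (Fin d × Fin d) (Fin d × Fin d) ℂ :=
  Matrix.of fun p q => if q = p.swap then 1 else 0

theorem swF_mul (d : ℕ) : swF d * swF d = 1 := by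
  ext p q
  simp only [swF, Matrix.mul_apply, Matrix.of_apply, Matrix.one_apply, ite_mul, one_mul, zero_mul,
    Finset.sum_ite_eq', Finset.sum_ite_eq, Finset.mem_univ, if_true, Prod.swap_swap]
  simp [eq_comm]

theorem swF_herm (d : ℕ) : (swF d)ᴴ = swF d := by
  ext p q
  simp only [swF, Matrix.conjTranspose_apply, Matrix.of_apply, Prod.ext_iff, Prod.swap]
  by_cases h : p.1 = q.2 <;> by_cases h' : p.2 = q.1 <;> simp [h, h', eq_comm]
  exact fun h2 => h' h2.symm

theorem phiM_herm (d : ℕ) : (phiM d)ᴴ = phiM d := by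
  ext p q
  simp only [phiM, Matrix.conjTranspose_apply, Matrix.of_apply]
  by_cases h : p.1 = p.2 <;> by_cases h' : q.1 = q.2 <;> simp [h, h']

theorem phiM_mul (d : ℕ) (hd : 2 ≤ d) : phiM d * phiM d = phiM d := by
  have : (d : ℂ) ≠ 0 := by norm_cast; omega
  ext p q
  simp only [phiM, Matrix.mul_apply, Matrix.of_apply, Fintype.sum_prod_type]
  by_cases h : p.1 = p.2 <;> by_cases h' : q.1 = q.2 <;> simp [h, h', this]

theorem psd_idem {n : Type*} [Fintype n] (A : Matrix n n ℂ) (h : Aᴴ = A) (h2 : A * A = A) :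
    A.PosSemidef := by
  have := Matrix.posSemidef_conjTranspose_mul_self A
  rwa [h, h2] at this

theorem phiM_psd (d : ℕ) (hd : 2 ≤ d) : (phiM d).PosSemidef :=
  psd_idem _ (phiM_herm d) (phiM_mul d hd)

theorem phiC_psd (d : ℕ) (hd : 2 ≤ d) : (1 - phiM d).PosSemidef := by
  apply psd_idem
  · simp [phiM_herm]
  · simp [sub_mul, mul_sub, phiM_mul d hd]

theorem smul_psd {n : Type*} [Fintype n] {A : Matrix n n ℂ} (h : A.PosSemidef) {r : ℝ}
    (hr : 0 ≤ r) : ((r : ℂ) • A).PosSemidef :=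
  h.smul (by exact_mod_cast hr)

theorem one_add_psd (d : ℕ) (a : ℝ) (h1 : -1 ≤ a) (h2 : a ≤ 1) :
    (1 + (a : ℂ) • swF d).PosSemidef := by
  have hp : (1 + swF d).PosSemidef := by
    have := smul_psd (Matrix.posSemidef_conjTranspose_mul_self (1 + swF d)) (r := 1/2) (by norm_num)
    convert this using 1
    simp only [conjTranspose_add, conjTranspose_one, swF_herm, add_mul, mul_add, swF_mul, one_mul, mul_one]
    push_cast
    module
  have hm : (1 - swF d).PosSemidef := by
    have := smul_psd (Matrix.posSemidef_conjTranspose_mul_self (1 - swF d)) (r := 1/2) (by norm_num)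
    convert this using 1
    simp only [conjTranspose_sub, conjTranspose_one, swF_herm, sub_mul, mul_sub, swF_mul, one_mul, mul_one]
    push_cast
    module
  have := (smul_psd hp (r := (1+a)/2) (by linarith)).add (smul_psd hm (r := (1-a)/2) (by linarith))
  convert this using 1
  push_cast
  module

/-- one-site partial transpose -/
def pt1 (d : ℕ) (M : Matrix (Fin d × Fin d) (Fin d × Fin d) ℂ) :
    Matrix (Fin d × Fin d) (Fin d × Fin d) ℂ :=
  Matrix.of fun x y => M (y.1, x.2) (x.1, y.2)

theorem pt1_phi (d : ℕ) : pt1 d (phiM d) = ((1 / d : ℝ) : ℂ) • swF d := by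
  ext x y
  simp only [pt1, phiM, swF, Matrix.of_apply, Matrix.smul_apply, Prod.ext_iff, Prod.swap]
  by_cases h : y.1 = x.2 <;> by_cases h' : x.1 = y.2 <;> simp [h, h', eq_comm]

theorem pt1_one (d : ℕ) : pt1 d 1 = 1 := by
  ext x y
  simp only [pt1, Matrix.of_apply, Matrix.one_apply, Prod.ext_iff]
  congr 1
  apply propext
  constructor <;> rintro ⟨h, h'⟩ <;> exact ⟨h.symm, h'⟩

/-- product matrix -/
def tp {d : ℕ} {E : Type*} [Fintype E] (M : E → Matrix (Fin d × Fin d) (Fin d × Fin d) ℂ) :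
    Matrix (E → Fin d × Fin d) (E → Fin d × Fin d) ℂ :=
  Matrix.of fun x y => ∏ e, M e (x e) (y e)

theorem pm_psd {n E : Type*} [Fintype n] (s : Finset E) (X Y : E → Matrix n n ℂ)
    (hm : ∀ e ∈ s, (X e - Y e).PosSemidef) (hp : ∀ e ∈ s, (X e + Y e).PosSemidef) :
    (Matrix.of (fun x y => ∏ e ∈ s, X e x y) - Matrix.of (fun x y => ∏ e ∈ s, Y e x y)).PosSemidef ∧
    (Matrix.of (fun x y => ∏ e ∈ s, X e x y) + Matrix.of (fun x y => ∏ e ∈ s, Y e x y)).PosSemidef := by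
  classical
  induction s using Finset.induction_on with
  | empty =>
    have h1 : (Matrix.of (fun _ _ => (1 : ℂ)) : Matrix n n ℂ).PosSemidef := by
      convert Matrix.posSemidef_vecMulVec_self_star (fun _ : n => (1 : ℂ)) using 1
      ext; simp [vecMulVec]
    simp only [Finset.prod_empty]
    exact ⟨by rw [sub_self]; exact Matrix.PosSemidef.zero, h1.add h1⟩
  | insert a s ha ih =>
    obtain ⟨im, ip⟩ := ih (fun e he => hm e (by simp [he])) (fun e he => hp e (by simp [he]))
    have am := hm a (by simp)
    have ap := hp a (by simp)
    constructor
    · have := smul_psd ((am.hadamard ip).add (ap.hadamard im)) (r := 1/2) (by norm_num)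
      convert this using 1
      ext x y
      simp [Finset.prod_insert ha]
      ring
    · have := smul_psd ((am.hadamard im).add (ap.hadamard ip)) (r := 1/2) (by norm_num)
      convert this using 1
      ext x y
      simp [Finset.prod_insert ha]
      ring

theorem tp_sub_psd {d : ℕ} {E : Type*} [Fintype E] [DecidableEq E]
    (X Y : E → Matrix (Fin d × Fin d) (Fin d × Fin d) ℂ)
    (hm : ∀ e, (X e - Y e).PosSemidef) (hp : ∀ e, (X e + Y e).PosSemidef) :
    (tp X - tp Y).PosSemidef := by
  have := (pm_psd Finset.univ (fun e => (X e).submatrix (fun x : E → Fin d × Fin d => x e) (fun x => x e))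
    (fun e => (Y e).submatrix (fun x => x e) (fun x => x e))
    (fun e _ => (hm e).submatrix (fun x : E → Fin d × Fin d => x e))
    (fun e _ => (hp e).submatrix (fun x : E → Fin d × Fin d => x e))).1
  exact this

theorem tp_psd {d : ℕ} {E : Type*} [Fintype E] [DecidableEq E]
    (X : E → Matrix (Fin d × Fin d) (Fin d × Fin d) ℂ)
    (h : ∀ e, (X e).PosSemidef) : (tp X).PosSemidef := by
  by_cases hE : Nonempty E
  · have := tp_sub_psd X (fun _ => 0) (by simpa using h) (by simpa using h)
    convert this using 1
    ext x y
    simp [tp]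
  · have := (pm_psd Finset.univ (fun e => (X e).submatrix (fun x : E → Fin d × Fin d => x e) (fun x => x e))
      (fun e => 0) (fun e => absurd ⟨e⟩ hE) (fun e => absurd ⟨e⟩ hE)).2
    convert smul_psd this (r := 1/2) (by norm_num) using 1
    have : IsEmpty E := not_nonempty_iff.mp hE
    ext x y
    simp [tp]
    norm_num

theorem ptK_tp {d : ℕ} {E : Type*} [Fintype E] [DecidableEq E] (K : Finset E)
    (X : E → Matrix (Fin d × Fin d) (Fin d × Fin d) ℂ) :
    ptK d E K (tp X) = tp (fun e => if e ∈ K then pt1 d (X e) else X e) := by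
  ext x y
  simp only [ptK, tp, Matrix.of_apply]
  refine Finset.prod_congr rfl fun e _ => ?_
  by_cases h : e ∈ K <;> simp [h, pt1]

theorem ptK_sub {d : ℕ} {E : Type*} [DecidableEq E] (K : Finset E)
    (A B : Matrix (E → Fin d × Fin d) (E → Fin d × Fin d) ℂ) :
    ptK d E K (A - B) = ptK d E K A - ptK d E K B := rfl

theorem ptK_ptK {d : ℕ} {E : Type*} [DecidableEq E] (K : Finset E)
    (A : Matrix (E → Fin d × Fin d) (E → Fin d × Fin d) ℂ) :
    ptK d E K (ptK d E K A) = A := by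
  ext x y
  simp only [ptK, Matrix.of_apply]
  congr 1 <;> · funext e; by_cases h : e ∈ K <;> simp [h]

/-- `(I - Φ)/(d-1)` -/
noncomputable def bM (d : ℕ) : Matrix (Fin d × Fin d) (Fin d × Fin d) ℂ :=
  ((1 / ((d : ℝ) - 1) : ℝ) : ℂ) • (1 - phiM d)

/-- The `B(G)`-SSW is fully decomposable with respect to the cuts of `G`:
for every nonempty cut `K ∈ B(G)` there is a positive semidefinite `Q` with
`Q^{Γ_K} ⪯ W_{B(G)}`. -/
theorem stmt_11 (d : ℕ) (hd : 2 ≤ d) (V : Type*) [Fintype V] [DecidableEq V]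
    (G : SimpleGraph V) [DecidableRel G.Adj] (hconn : G.Connected)
    (hE : G.edgeSet.Nonempty) (K : Finset ↥G.edgeSet)
    (hK : K ∈ cutSpace G) (hKne : K.Nonempty) :
    ∃ Q : Matrix (↥G.edgeSet → Fin d × Fin d) (↥G.edgeSet → Fin d × Fin d) ℂ,
      Q.PosSemidef ∧ (WBG d G - ptK d ↥G.edgeSet K Q).PosSemidef := by
  have hd' : (2 : ℝ) ≤ d := by exact_mod_cast hd
  have hW : WBG d G = (-1 : ℂ) • tp (fun _ => phiM d) +
      ∑ L ∈ (cutSpace G).filter (fun K => K.Nonempty),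
        tp (fun e => if e ∈ L then bM d else phiM d) := by
    unfold WBG
    congr 1
    refine Finset.sum_congr rfl fun L _ => ?_
    ext x y
    simp only [tp, Matrix.of_apply]
    refine Finset.prod_congr rfl fun e _ => ?_
    by_cases h : e ∈ L
    · simp [h, bM, div_eq_inv_mul]
    · simp [h]
  refine ⟨ptK d _ K (tp (fun e => if e ∈ K then bM d else phiM d) - tp (fun _ => phiM d)), ?_, ?_⟩
  · have hb : pt1 d (bM d) = ((1 / ((d : ℝ) - 1) : ℝ) : ℂ) • (1 - pt1 d (phiM d)) := by
      rw [← pt1_one d]; rfl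
    have e1 : (d : ℝ) - 1 ≠ 0 := by linarith
    have e2 : (d : ℝ) ≠ 0 := by linarith
    have e1' : (d : ℂ) - 1 ≠ 0 := by exact_mod_cast e1
    have e2' : (d : ℂ) ≠ 0 := by exact_mod_cast e2
    have hr : (0 : ℝ) ≤ 1 / ((d : ℝ) - 1) := by apply one_div_nonneg.mpr; linarith
    rw [ptK_sub, ptK_tp, ptK_tp]
    apply tp_sub_psd
    · intro e
      by_cases h : e ∈ K
      · simp only [h, if_true]
        rw [hb, pt1_phi]
        convert smul_psd (one_add_psd d (-1) (by norm_num) (by norm_num)) hr using 1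
        push_cast
        match_scalars <;> field_simp
        ring
      · simp only [h, if_false, sub_self]; exact Matrix.PosSemidef.zero
    · intro e
      by_cases h : e ∈ K
      · simp only [h, if_true]
        rw [hb, pt1_phi]
        convert smul_psd (one_add_psd d ((d - 2) / d) ?_ ?_) hr using 1
        · push_cast
          match_scalars <;> field_simp
          ring
        · have : (0 : ℝ) ≤ (d - 2) / d := div_nonneg (by linarith) (by linarith)
          linarith
        · rw [div_le_one (by linarith)]; linarith
      · simp only [h, if_false]; exact (phiM_psd d hd).add (phiM_psd d hd)
  · rw [ptK_ptK, hW, ← Finset.add_sum_erase _ _ (Finset.mem_filter.mpr ⟨hK, hKne⟩)]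
    have : ∀ (A B C : Matrix (↥G.edgeSet → Fin d × Fin d) (↥G.edgeSet → Fin d × Fin d) ℂ),
      (-1 : ℂ) • A + (B + C) - (B - A) = C := by intro A B C; module
    rw [this]
    apply Matrix.posSemidef_sum
    intro L _
    apply tp_psd
    intro e
    by_cases h : e ∈ L
    · simp only [h, if_true]
      exact smul_psd (phiC_psd d hd) (by apply one_div_nonneg.mpr; linarith)
    · simp only [h, if_false]
      exact phiM_psd d hd
end

section
/- Trace of the E-SSW on the isotropic pair-entangled network state: for 0 ≤ p ≤ 1, let ρ_p = p·Φ + ((1−p)/d²)·I on each edge and ρ = ⊗_{e∈E} ρ_p on the total space, and let W_E = −d · ⊗_{e∈E} Φ_e + ((d+1)^{1−|E|}/2) · ⊗_{e∈E} (I_e + d·Φ_e). Then Tr(W_E ρ) = ((d+1)/2) · ((1+(d−1)p)/d)^{|E|} − d · ((1+(d²−1)p)/d²)^{|E|}. -/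
open Matrix Finset
open scoped ComplexOrder

/-- The `E`-SSW: `W_E = −d·⊗_{e∈E} Φ_e + ((d+1)^{1−|E|}/2)·⊗_{e∈E}(I_e + d·Φ_e)`. -/
noncomputable def WE (d : ℕ) (E : Type*) [Fintype E] [DecidableEq E] :
    Matrix (E → Fin d × Fin d) (E → Fin d × Fin d) ℂ :=
  (-(d : ℂ)) • Matrix.of (fun x y => ∏ e, phiM d (x e) (y e))
    + ((((d : ℂ) + 1) ^ ((1 : ℤ) - (Fintype.card E : ℤ)) / 2)) •
      Matrix.of (fun x y => ∏ e, ((1 : Matrix (Fin d × Fin d) (Fin d × Fin d) ℂ)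
        + (d : ℂ) • phiM d) (x e) (y e))

/-- The isotropic pair-entangled network state `⊗_{e∈E} (p·Φ + ((1−p)/d²)·I)`. -/
noncomputable def ipen (d : ℕ) (E : Type*) [Fintype E] [DecidableEq E] (p : ℝ) :
    Matrix (E → Fin d × Fin d) (E → Fin d × Fin d) ℂ :=
  Matrix.of fun x y => ∏ e,
    ((p : ℂ) • phiM d + ((1 - (p : ℂ)) / (d : ℂ) ^ 2) •
      (1 : Matrix (Fin d × Fin d) (Fin d × Fin d) ℂ)) (x e) (y e)

theorem tens_trace {E n : Type*} [Fintype E] [DecidableEq E] [Fintype n] [DecidableEq n]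
    (A B : Matrix n n ℂ) :
    ((Matrix.of (fun x y : E → n => ∏ e, A (x e) (y e))) *
      (Matrix.of (fun x y : E → n => ∏ e, B (x e) (y e)))).trace
      = (A * B).trace ^ Fintype.card E := by
  have h : ∀ f : n → ℂ, ∑ x : E → n, ∏ e, f (x e) = (∑ i, f i) ^ Fintype.card E := by
    intro f
    rw [← Fintype.prod_sum (fun (_ : E) i => f i)]
    simp
  simp only [Matrix.trace, Matrix.diag_apply, Matrix.mul_apply, Matrix.of_apply]
  rw [← h]
  refine Finset.sum_congr rfl fun x _ => ?_
  rw [Fintype.prod_sum (fun (e : E) j => A (x e) j * B j (x e))]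
  simp [Finset.prod_mul_distrib]

theorem phi_trace (d : ℕ) (hd : (d : ℂ) ≠ 0) : (phiM d).trace = 1 := by
  simp [Matrix.trace, phiM, Fintype.sum_prod_type, hd]

theorem phi_sq (d : ℕ) (hd : (d : ℂ) ≠ 0) : phiM d * phiM d = phiM d := by
  ext ⟨a, b⟩ ⟨c, e⟩
  simp only [Matrix.mul_apply, phiM, Matrix.of_apply, Fintype.sum_prod_type]
  by_cases h1 : a = b <;> by_cases h2 : c = e <;> simp [h1, h2, hd]

/-- Trace of the `E`-SSW against the isotropic pair-entangled network state:
`Tr(W_E ρ) = ((d+1)/2)·((1+(d−1)p)/d)^{|E|} − d·((1+(d²−1)p)/d²)^{|E|}`. -/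
theorem stmt_12 (d : ℕ) (hd : 2 ≤ d) (E : Type*) [Fintype E] [DecidableEq E] [Nonempty E]
    (p : ℝ) (hp0 : 0 ≤ p) (hp1 : p ≤ 1) :
    (WE d E * ipen d E p).trace
      = (((d : ℂ) + 1) / 2) * (((1 + ((d : ℂ) - 1) * (p : ℂ)) / (d : ℂ)) ^ Fintype.card E)
        - (d : ℂ) * (((1 + ((d : ℂ) ^ 2 - 1) * (p : ℂ)) / (d : ℂ) ^ 2) ^ Fintype.card E) := by
  have h0 : (d : ℂ) ≠ 0 := by
    have : d ≠ 0 := by omega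
    exact_mod_cast this
  have h1 : (d : ℂ) + 1 ≠ 0 := by exact_mod_cast Nat.succ_ne_zero d
  unfold WE ipen
  rw [add_mul, Matrix.trace_add, Matrix.smul_mul, Matrix.smul_mul, Matrix.trace_smul,
    Matrix.trace_smul, tens_trace, tens_trace]
  have t1 : (phiM d * ((p : ℂ) • phiM d + ((1 - (p : ℂ)) / (d : ℂ) ^ 2) •
      (1 : Matrix (Fin d × Fin d) (Fin d × Fin d) ℂ))).trace
      = (1 + ((d : ℂ) ^ 2 - 1) * (p : ℂ)) / (d : ℂ) ^ 2 := by
    simp only [mul_add, Matrix.mul_smul, mul_one, phi_sq d h0, Matrix.trace_add,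
      Matrix.trace_smul, phi_trace d h0, smul_eq_mul]
    field_simp
    ring
  have t2 : (((1 : Matrix (Fin d × Fin d) (Fin d × Fin d) ℂ) + (d : ℂ) • phiM d) *
      ((p : ℂ) • phiM d + ((1 - (p : ℂ)) / (d : ℂ) ^ 2) •
      (1 : Matrix (Fin d × Fin d) (Fin d × Fin d) ℂ))).trace
      = ((d : ℂ) + 1) * ((1 + ((d : ℂ) - 1) * (p : ℂ)) / (d : ℂ)) := by
    rw [add_mul, one_mul, Matrix.smul_mul, Matrix.trace_add, Matrix.trace_smul, t1]
    simp only [Matrix.trace_add, Matrix.trace_smul, phi_trace d h0, smul_eq_mul,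
      Matrix.trace_one, Fintype.card_prod, Fintype.card_fin, Nat.cast_mul]
    field_simp
    ring
  rw [t1, t2, mul_pow, zpow_sub₀ h1, zpow_one, zpow_natCast]
  have h2 : ((d : ℂ) + 1) ^ Fintype.card E ≠ 0 := pow_ne_zero _ h1
  simp only [smul_eq_mul]
  generalize ((1 + ((d : ℂ) - 1) * (p : ℂ)) / (d : ℂ)) ^ Fintype.card E = X
  generalize ((1 + ((d : ℂ) ^ 2 - 1) * (p : ℂ)) / (d : ℂ) ^ 2) ^ Fintype.card E = Y
  generalize ((d : ℂ) + 1) ^ Fintype.card E = Z at *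
  field_simp
  ring
end

section
/- GME negativity of isotropic pair-entangled states on tree networks: let G = (V, E) be a finite tree with at least one edge, fix for each edge an orientation so that for edge e = (u, v) the first ℂ^d factor is owned by u and the second by v. For 0 ≤ p ≤ 1, let ρ = ⊗_{e∈E} (p·Φ_e + ((1−p)/d²)·I_e), a state on the total space, and let W_E = −d · ⊗_{e∈E} Φ_e + ((d+1)^{1−|E|}/2) · ⊗_{e∈E} (I_e + d·Φ_e). Then N(ρ) = max{0, −Tr(W_E ρ)}. -/
open Matrix Finset
open scoped ComplexOrder
open Classical

/-- The absolute value of the sum of the negative eigenvalues of a matrix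
(zero if the matrix is not Hermitian). -/
noncomputable def negSum {n : Type*} [Fintype n] [DecidableEq n]
    (M : Matrix n n ℂ) : ℝ :=
  if h : M.IsHermitian then
    |∑ i ∈ Finset.univ.filter (fun i => h.eigenvalues i < 0), h.eigenvalues i|
  else 0

/-- A quantum state: positive semidefinite with unit trace. -/
def IsState {n : Type*} [Fintype n] (ρ : Matrix n n ℂ) : Prop :=
  ρ.PosSemidef ∧ ρ.trace = 1

/-- `Γ_S` on a quantum network: given an orientation `orient` assigning to each edge its two
endpoints (owner of the first and of the second `ℂ^d` factor), the partial transpose of all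
factors owned by vertices in `S`. -/
def ptParty {V : Type*} [DecidableEq V] (E : Type*) (orient : E → V × V) (S : Finset V)
    (M : Matrix (E → Fin d × Fin d) (E → Fin d × Fin d) ℂ) :
    Matrix (E → Fin d × Fin d) (E → Fin d × Fin d) ℂ :=
  Matrix.of fun x y =>
    M (fun e => (if (orient e).1 ∈ S then (y e).1 else (x e).1,
                 if (orient e).2 ∈ S then (y e).2 else (x e).2))
      (fun e => (if (orient e).1 ∈ S then (x e).1 else (y e).1,
                 if (orient e).2 ∈ S then (x e).2 else (y e).2))

/-- The GME negativity of a network state: infimum over all finite decompositions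
`ρ = Σ p_S ρ_S` (each term labelled by a nonempty proper subset `S ⊂ V`, `p_S ≥ 0`, each
`ρ_S` a state) of `Σ p_S N_S(ρ_S)`. -/
noncomputable def GMEnegNet {V : Type*} [Fintype V] [DecidableEq V] (d : ℕ) (E : Type*)
    [Fintype E] [DecidableEq E] (orient : E → V × V)
    (ρ : Matrix (E → Fin d × Fin d) (E → Fin d × Fin d) ℂ) : ℝ :=
  sInf {r : ℝ | ∃ (m : ℕ) (S : Fin m → Finset V) (p : Fin m → ℝ)
      (σ : Fin m → Matrix (E → Fin d × Fin d) (E → Fin d × Fin d) ℂ),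
      (∀ k, (S k).Nonempty) ∧ (∀ k, S k ≠ Finset.univ) ∧ (∀ k, 0 ≤ p k) ∧
      (∀ k, IsState (σ k)) ∧ ρ = ∑ k, (p k : ℂ) • σ k ∧
      r = ∑ k, p k * negSum (ptParty E orient (S k) (σ k))}

section linalg
variable {n : Type*} [Fintype n]

theorem aux_trace_mul_eig [DecidableEq n] (M Q : Matrix n n ℂ) (h : M.IsHermitian) :
    (Q * M).trace = ∑ i, (h.eigenvalues i : ℂ) *
      ((h.eigenvectorUnitary : Matrix n n ℂ)ᴴ * Q * (h.eigenvectorUnitary : Matrix n n ℂ)) i i := by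
  conv_lhs => rw [h.spectral_theorem, Unitary.conjStarAlgAut_apply]
  rw [← Matrix.mul_assoc, ← Matrix.mul_assoc, Matrix.trace_mul_comm, ← Matrix.mul_assoc,
    ← Matrix.mul_assoc]
  simp only [Matrix.trace, Matrix.diag, Matrix.mul_diagonal, Matrix.star_eq_conjTranspose]
  refine Finset.sum_congr rfl fun i _ => ?_
  simp [mul_comm]

theorem aux_conj_eig [DecidableEq n] (M : Matrix n n ℂ) (h : M.IsHermitian) (i : n) :
    ((h.eigenvectorUnitary : Matrix n n ℂ)ᴴ * M * (h.eigenvectorUnitary : Matrix n n ℂ)) i i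
      = (h.eigenvalues i : ℂ) := by
  have hu : (h.eigenvectorUnitary : Matrix n n ℂ)ᴴ * (h.eigenvectorUnitary : Matrix n n ℂ) = 1 := by
    rw [← Matrix.star_eq_conjTranspose]; simp
  have : (h.eigenvectorUnitary : Matrix n n ℂ)ᴴ * M * (h.eigenvectorUnitary : Matrix n n ℂ)
      = diagonal (RCLike.ofReal ∘ h.eigenvalues) := by
    conv_lhs => 
      enter [1, 2]
      rw [h.spectral_theorem, Unitary.conjStarAlgAut_apply]
    rw [Matrix.star_eq_conjTranspose, ← Matrix.mul_assoc, ← Matrix.mul_assoc, hu, Matrix.one_mul,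
      Matrix.mul_assoc, hu, Matrix.mul_one]
  rw [this]; simp

theorem aux_psd_trace_mul (P S : Matrix n n ℂ) (hP : P.PosSemidef) (hS : S.PosSemidef) :
    0 ≤ (P * S).trace.re := by
  rw [aux_trace_mul_eig S P hS.1, Complex.re_sum]
  refine Finset.sum_nonneg fun i _ => ?_
  have h1 := (hP.conjTranspose_mul_mul_same
    (hS.1.eigenvectorUnitary : Matrix n n ℂ)).diag_nonneg (i := i)
  rw [Complex.re_ofReal_mul]
  exact mul_nonneg (hS.eigenvalues_nonneg i) (Complex.le_def.1 h1).1

theorem aux_negSum_ge [DecidableEq n] (M Q : Matrix n n ℂ) (h : M.IsHermitian) (hQ : Q.PosSemidef)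
    (hQ1 : (1 - Q).PosSemidef) : -((Q * M).trace.re) ≤ negSum M := by
  rw [negSum, dif_pos h, aux_trace_mul_eig M Q h, Complex.re_sum]
  refine le_trans ?_ (neg_le_abs _)
  rw [neg_le_neg_iff, Finset.sum_filter]
  refine Finset.sum_le_sum fun i _ => ?_
  have h1 := (Complex.le_def.1 ((hQ.conjTranspose_mul_mul_same
    (h.eigenvectorUnitary : Matrix n n ℂ)).diag_nonneg (i := i))).1
  have h2 := (Complex.le_def.1 ((hQ1.conjTranspose_mul_mul_same
    (h.eigenvectorUnitary : Matrix n n ℂ)).diag_nonneg (i := i))).1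
  have hu : (h.eigenvectorUnitary : Matrix n n ℂ)ᴴ * (h.eigenvectorUnitary : Matrix n n ℂ) = 1 := by
    rw [← Matrix.star_eq_conjTranspose]; simp
  rw [Matrix.mul_sub, Matrix.sub_mul, Matrix.mul_one, hu] at h2
  simp at h1 h2
  rw [Complex.re_ofReal_mul]
  split_ifs with hl
  · nlinarith
  · push Not at hl
    exact mul_nonneg hl h1

theorem aux_negSum_nonneg [DecidableEq n] (M : Matrix n n ℂ) : 0 ≤ negSum M := by
  rw [negSum]; split_ifs
  · exact abs_nonneg _
  · exact le_rfl

theorem aux_negSum_le [DecidableEq n] (P R : Matrix n n ℂ) (hP : P.PosSemidef) (hR : R.PosSemidef) :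
    negSum (P - R) ≤ R.trace.re := by
  have h : (P - R).IsHermitian := hP.1.sub hR.1
  rw [negSum, dif_pos h, abs_of_nonpos (Finset.sum_nonpos fun i hi => (Finset.mem_filter.1 hi).2.le)]
  have hu : (h.eigenvectorUnitary : Matrix n n ℂ) * (h.eigenvectorUnitary : Matrix n n ℂ)ᴴ = 1 := by
    rw [← Matrix.star_eq_conjTranspose]; simp
  have ht : R.trace = ((h.eigenvectorUnitary : Matrix n n ℂ)ᴴ * R *
      (h.eigenvectorUnitary : Matrix n n ℂ)).trace := by
    rw [Matrix.trace_mul_comm, ← Matrix.mul_assoc, hu, Matrix.one_mul]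
  rw [ht, Matrix.trace, Complex.re_sum, Finset.sum_filter, ← Finset.sum_neg_distrib]
  refine Finset.sum_le_sum fun i _ => ?_
  have h1 := (Complex.le_def.1 ((hP.conjTranspose_mul_mul_same
    (h.eigenvectorUnitary : Matrix n n ℂ)).diag_nonneg (i := i))).1
  have h2 := (Complex.le_def.1 ((hR.conjTranspose_mul_mul_same
    (h.eigenvectorUnitary : Matrix n n ℂ)).diag_nonneg (i := i))).1
  have h3 := congrArg Complex.re (aux_conj_eig (P - R) h i)
  rw [Matrix.mul_sub, Matrix.sub_mul] at h3
  simp at h1 h2 h3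
  simp only [Matrix.diag_apply]
  split_ifs with hl
  · linarith
  · simpa using h2

theorem aux_negSum_psd [DecidableEq n] (P : Matrix n n ℂ) (hP : P.PosSemidef) : negSum P = 0 := by
  refine le_antisymm ?_ (aux_negSum_nonneg P)
  simpa using aux_negSum_le P 0 hP Matrix.PosSemidef.zero

/-- Orthogonal projections. -/
def AuxProj (A : Matrix n n ℂ) : Prop := Aᴴ = A ∧ A * A = A

theorem AuxProj.psd {A : Matrix n n ℂ} (h : AuxProj A) : A.PosSemidef := by
  have := Matrix.posSemidef_conjTranspose_mul_self A
  rwa [h.1, h.2] at this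

theorem AuxProj.compl [DecidableEq n] {A : Matrix n n ℂ} (h : AuxProj A) : AuxProj (1 - A) := by
  constructor
  · simp [h.1]
  · simp [Matrix.mul_sub, Matrix.sub_mul, h.2]

end linalg

section tens
variable {E κ : Type*} [Fintype E] [DecidableEq E]

/-- tensor product over the edges -/
def auxT (A : E → Matrix κ κ ℂ) : Matrix (E → κ) (E → κ) ℂ :=
  Matrix.of fun x y => ∏ e, A e (x e) (y e)

theorem auxT_mul [Fintype κ] (A B : E → Matrix κ κ ℂ) :
    auxT A * auxT B = auxT fun e => A e * B e := by
  ext x y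
  simp only [auxT, Matrix.mul_apply, Matrix.of_apply]
  rw [Finset.prod_univ_sum]
  simp [Finset.prod_mul_distrib]

theorem auxT_trace [Fintype κ] (A : E → Matrix κ κ ℂ) : (auxT A).trace = ∏ e, (A e).trace := by
  simp only [auxT, Matrix.trace, Matrix.diag_apply, Matrix.of_apply]
  rw [Finset.prod_univ_sum]
  simp

theorem auxT_conj (A : E → Matrix κ κ ℂ) : (auxT A)ᴴ = auxT fun e => (A e)ᴴ := by
  ext x y
  simp [auxT, Matrix.conjTranspose_apply]

theorem auxT_one [DecidableEq κ] : auxT (fun _ : E => (1 : Matrix κ κ ℂ)) = 1 := by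
  ext x y
  simp only [auxT, Matrix.of_apply, Matrix.one_apply]
  by_cases h : x = y
  · simp [h]
  · rw [if_neg h]
    obtain ⟨e, he⟩ := Function.ne_iff.1 h
    exact Finset.prod_eq_zero (Finset.mem_univ e) (by simp [he])

theorem auxT_proj [Fintype κ] (A : E → Matrix κ κ ℂ) (h : ∀ e, AuxProj (A e)) :
    AuxProj (auxT A) := by
  refine ⟨?_, ?_⟩
  · rw [auxT_conj]; congr 1; ext1 e; exact (h e).1
  · rw [auxT_mul]; congr 1; ext1 e; exact (h e).2

theorem aux_prod_ite_expand (a b : E → ℂ) :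
    ∏ e, (a e + b e) = ∑ s : Finset E, ∏ e, (if e ∈ s then a e else b e) := by
  rw [Fintype.prod_add]
  refine Finset.sum_congr rfl fun s _ => ?_
  rw [Finset.prod_ite]
  congr 1
  · congr 1; ext; simp
  · congr 1; ext; simp

theorem auxT_expand (a b : E → ℝ) (P R : E → Matrix κ κ ℂ) :
    auxT (fun e => (a e : ℂ) • P e + (b e : ℂ) • R e) =
      ∑ s : Finset E, ((∏ e, (if e ∈ s then a e else b e) : ℝ) : ℂ) •
        auxT (fun e => if e ∈ s then P e else R e) := by
  ext x y
  simp only [auxT, Matrix.of_apply, Matrix.sum_apply, Matrix.add_apply, Matrix.smul_apply,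
    smul_eq_mul]
  rw [aux_prod_ite_expand]
  refine Finset.sum_congr rfl fun s _ => ?_
  rw [Complex.ofReal_prod, ← Finset.prod_mul_distrib]
  refine Finset.prod_congr rfl fun e _ => ?_
  split_ifs <;> rfl

theorem aux_psd_comb [Fintype κ] (α β δ : ℝ) (a b a' b' a'' b'' : E → ℝ) (P R : E → Matrix κ κ ℂ)
    (hP : ∀ e, AuxProj (P e)) (hR : ∀ e, AuxProj (R e))
    (h : ∀ s : Finset E, 0 ≤ α * ∏ e, (if e ∈ s then a e else b e)
      + β * ∏ e, (if e ∈ s then a' e else b' e) + δ * ∏ e, (if e ∈ s then a'' e else b'' e)) :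
    ((α : ℂ) • auxT (fun e => (a e : ℂ) • P e + (b e : ℂ) • R e)
      + (β : ℂ) • auxT (fun e => (a' e : ℂ) • P e + (b' e : ℂ) • R e)
      + (δ : ℂ) • auxT (fun e => (a'' e : ℂ) • P e + (b'' e : ℂ) • R e)).PosSemidef := by
  rw [auxT_expand, auxT_expand, auxT_expand, Finset.smul_sum, Finset.smul_sum, Finset.smul_sum,
    ← Finset.sum_add_distrib, ← Finset.sum_add_distrib]
  refine Matrix.posSemidef_sum _ fun s _ => ?_
  rw [smul_smul, smul_smul, smul_smul, ← add_smul, ← add_smul, ← Complex.ofReal_mul,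
    ← Complex.ofReal_mul, ← Complex.ofReal_mul, ← Complex.ofReal_add, ← Complex.ofReal_add]
  refine (auxT_proj _ fun e => ?_).psd.smul ?_
  · split_ifs
    · exact hP e
    · exact hR e
  · exact_mod_cast h s

theorem aux_psd_comb2 [Fintype κ] (α β : ℝ) (a b a' b' : E → ℝ) (P R : E → Matrix κ κ ℂ)
    (hP : ∀ e, AuxProj (P e)) (hR : ∀ e, AuxProj (R e))
    (h : ∀ s : Finset E, 0 ≤ α * ∏ e, (if e ∈ s then a e else b e)
      + β * ∏ e, (if e ∈ s then a' e else b' e)) :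
    ((α : ℂ) • auxT (fun e => (a e : ℂ) • P e + (b e : ℂ) • R e)
      + (β : ℂ) • auxT (fun e => (a' e : ℂ) • P e + (b' e : ℂ) • R e)).PosSemidef := by
  have := aux_psd_comb α β 0 a b a' b' a' b' P R hP hR (by simpa using h)
  simpa using this

theorem aux_psd_comb1 [Fintype κ] (a b : E → ℝ) (P R : E → Matrix κ κ ℂ)
    (hP : ∀ e, AuxProj (P e)) (hR : ∀ e, AuxProj (R e)) (ha : ∀ e, 0 ≤ a e) (hb : ∀ e, 0 ≤ b e) :
    (auxT (fun e => (a e : ℂ) • P e + (b e : ℂ) • R e)).PosSemidef := by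
  have := aux_psd_comb2 1 0 a b a b P R hP hR (fun s => by
    rw [zero_mul, add_zero, one_mul]
    refine Finset.prod_nonneg fun e _ => ?_
    split_ifs
    · exact ha e
    · exact hb e)
  simpa using this

theorem auxT_split (e0 : E) (f g h : E → Matrix κ κ ℂ) (h0 : g e0 + h e0 = f e0)
    (h1 : ∀ e, e ≠ e0 → g e = f e) (h2 : ∀ e, e ≠ e0 → h e = f e) :
    auxT g + auxT h = auxT f := by
  ext x y
  simp only [auxT, Matrix.add_apply, Matrix.of_apply]
  refine Finset.prod_add_prod_eq (Finset.mem_univ e0) ?_ ?_ ?_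
  · rw [← h0]; rfl
  · intro e _ he; rw [h1 e he]
  · intro e _ he; rw [h2 e he]

theorem aux_prod_split (e0 : E) (f : E → ℝ) :
    ∏ e, f e = f e0 * ∏ e ∈ Finset.univ.erase e0, f e :=
  (Finset.mul_prod_erase _ _ (Finset.mem_univ e0)).symm

theorem aux_pow_erase (e0 : E) (y : ℝ) :
    y ^ (Fintype.card E) = y * ∏ _e ∈ Finset.univ.erase e0, y := by
  rw [← aux_prod_split e0 (fun _ => y)]; simp

end tens
section loc
variable {d : ℕ}

/-- swap -/
noncomputable def auxF (d : ℕ) : Matrix (Fin d × Fin d) (Fin d × Fin d) ℂ :=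
  Matrix.of fun x y => if x.1 = y.2 ∧ x.2 = y.1 then 1 else 0

/-- symmetric projector -/
noncomputable def auxS (d : ℕ) : Matrix (Fin d × Fin d) (Fin d × Fin d) ℂ :=
  (1 / 2 : ℂ) • (1 + auxF d)

/-- local partial transpose -/
noncomputable def auxL (a b : Prop) (M : Matrix (Fin d × Fin d) (Fin d × Fin d) ℂ) :
    Matrix (Fin d × Fin d) (Fin d × Fin d) ℂ :=
  Matrix.of fun x y =>
    M (if a then y.1 else x.1, if b then y.2 else x.2) (if a then x.1 else y.1, if b then x.2 else y.2)

theorem auxL_add (a b : Prop) (M N : Matrix (Fin d × Fin d) (Fin d × Fin d) ℂ) :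
    auxL a b (M + N) = auxL a b M + auxL a b N := rfl

theorem auxL_smul (a b : Prop) (c : ℂ) (M : Matrix (Fin d × Fin d) (Fin d × Fin d) ℂ) :
    auxL a b (c • M) = c • auxL a b M := rfl

theorem auxL_one (a b : Prop) :
    auxL a b (1 : Matrix (Fin d × Fin d) (Fin d × Fin d) ℂ) = 1 := by
  ext ⟨x1, x2⟩ ⟨y1, y2⟩
  by_cases a <;> by_cases b <;> simp [auxL, Matrix.one_apply, *, eq_comm]

theorem auxL_phi_same (a b : Prop) (h : a ↔ b) : auxL a b (phiM d) = phiM d := by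
  ext ⟨x1, x2⟩ ⟨y1, y2⟩
  by_cases hb : b <;> simp [auxL, phiM, h, hb, and_comm]

theorem auxL_phi_cut (a b : Prop) (h : ¬ (a ↔ b)) :
    auxL a b (phiM d) = (1 / d : ℂ) • auxF d := by
  ext ⟨x1, x2⟩ ⟨y1, y2⟩
  by_cases ha : a <;> by_cases hb : b <;> simp [ha, hb] at h <;>
    simp [auxL, phiM, auxF, ha, hb, and_comm, eq_comm]

theorem auxF_sq : auxF d * auxF d = 1 := by
  ext ⟨x1, x2⟩ ⟨y1, y2⟩
  rw [Matrix.mul_apply, Finset.sum_eq_single (x2, x1)]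
  · simp [auxF, Matrix.one_apply, and_comm]
  · rintro ⟨z1, z2⟩ _ hz
    simp only [auxF, Matrix.of_apply]
    rw [if_neg, zero_mul]
    rintro ⟨rfl, rfl⟩
    exact hz rfl
  · simp

theorem auxF_herm : (auxF d)ᴴ = auxF d := by
  ext ⟨x1, x2⟩ ⟨y1, y2⟩
  simp only [auxF, Matrix.conjTranspose_apply, Matrix.of_apply]
  by_cases h : x1 = y2 ∧ x2 = y1
  · simp [h]
  · rw [if_neg h, if_neg]
    · simp
    · rintro ⟨rfl, rfl⟩; exact h ⟨rfl, rfl⟩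

theorem auxF_trace : (auxF d).trace = d := by
  have h : ∀ x y : Fin d, (x = y ∧ y = x) ↔ x = y := fun x y => ⟨fun h => h.1, fun h => ⟨h, h.symm⟩⟩
  simp only [auxF, Matrix.trace, Matrix.diag_apply, Matrix.of_apply, Fintype.sum_prod_type, h]
  simp

theorem auxS_proj : AuxProj (auxS d) := by
  constructor
  · simp [auxS, auxF_herm]
  · simp only [auxS, Matrix.smul_mul, Matrix.mul_smul, smul_smul, Matrix.add_mul, Matrix.mul_add,
      Matrix.one_mul, Matrix.mul_one, auxF_sq]
    module

theorem aux_phi_proj (hd : 2 ≤ d) : AuxProj (phiM d) := by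
  have hd0 : (d : ℂ) ≠ 0 := by norm_cast; omega
  constructor
  · ext ⟨x1, x2⟩ ⟨y1, y2⟩
    simp only [phiM, Matrix.conjTranspose_apply, Matrix.of_apply]
    by_cases h1 : x1 = x2 <;> by_cases h2 : y1 = y2 <;> simp [h1, h2]
  · ext ⟨x1, x2⟩ ⟨y1, y2⟩
    simp only [phiM, Matrix.mul_apply, Matrix.of_apply, Fintype.sum_prod_type]
    by_cases h1 : x1 = x2 <;> by_cases h2 : y1 = y2 <;> simp [h1, h2, hd0]

theorem aux_phi_trace (hd : 2 ≤ d) : (phiM d).trace = 1 := by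
  have hd0 : (d : ℂ) ≠ 0 := by norm_cast; omega
  simp [phiM, Matrix.trace, Fintype.sum_prod_type, hd0]

theorem aux_one_trace : (1 : Matrix (Fin d × Fin d) (Fin d × Fin d) ℂ).trace = (d : ℂ) ^ 2 := by
  simp [Matrix.trace_one, sq]

/-- first projector of the local basis -/
noncomputable def auxP (d : ℕ) (c : Prop) : Matrix (Fin d × Fin d) (Fin d × Fin d) ℂ :=
  if c then auxS d else phiM d

theorem auxP_proj (hd : 2 ≤ d) (c : Prop) : AuxProj (auxP d c) := by
  unfold auxP; split_ifs
  · exact auxS_proj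
  · exact aux_phi_proj hd

/-- The local partial transpose of `u Φ + v 1` in the local basis. -/
theorem auxL_eq (hd : 2 ≤ d) (a b c : Prop) (hc : c ↔ ¬ (a ↔ b)) (u v : ℝ) :
    auxL a b ((u : ℂ) • phiM d + (v : ℂ) • 1) =
      (((if c then v + u / d else v + u : ℝ)) : ℂ) • auxP d c +
      (((if c then v - u / d else v : ℝ)) : ℂ) • (1 - auxP d c) := by
  rw [auxL_add, auxL_smul, auxL_smul, auxL_one]
  by_cases h : c
  · rw [auxL_phi_cut _ _ (hc.1 h)]
    simp only [auxP, if_pos h, auxS]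
    push_cast
    module
  · rw [auxL_phi_same _ _ (by tauto)]
    simp only [auxP, if_neg h]
    push_cast
    module

end loc

section pt
variable {d : ℕ} {V E : Type*} [DecidableEq V] [Fintype E] [DecidableEq E] (orient : E → V × V)
  (S : Finset V)

theorem auxpt_T (A : E → Matrix (Fin d × Fin d) (Fin d × Fin d) ℂ) :
    ptParty E orient S (auxT A) =
      auxT fun e => auxL ((orient e).1 ∈ S) ((orient e).2 ∈ S) (A e) := by
  ext x y
  simp only [ptParty, auxT, auxL, Matrix.of_apply]
  refine Finset.prod_congr rfl fun e _ => ?_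
  congr

theorem auxpt_add (M N : Matrix (E → Fin d × Fin d) (E → Fin d × Fin d) ℂ) :
    ptParty E orient S (M + N) = ptParty E orient S M + ptParty E orient S N := rfl

theorem auxpt_smul (c : ℂ) (M : Matrix (E → Fin d × Fin d) (E → Fin d × Fin d) ℂ) :
    ptParty E orient S (c • M) = c • ptParty E orient S M := rfl

theorem auxpt_herm (M : Matrix (E → Fin d × Fin d) (E → Fin d × Fin d) ℂ) (h : M.IsHermitian) :
    (ptParty E orient S M).IsHermitian := by
  ext x y
  simp only [ptParty, Matrix.conjTranspose_apply, Matrix.of_apply]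
  exact h.apply _ _

/-- The index swap. -/
def auxSw (q : (E → Fin d × Fin d) × (E → Fin d × Fin d)) :
    (E → Fin d × Fin d) × (E → Fin d × Fin d) :=
  (fun e => (if (orient e).1 ∈ S then (q.2 e).1 else (q.1 e).1,
                 if (orient e).2 ∈ S then (q.2 e).2 else (q.1 e).2),
   fun e => (if (orient e).1 ∈ S then (q.1 e).1 else (q.2 e).1,
                 if (orient e).2 ∈ S then (q.1 e).2 else (q.2 e).2))

theorem auxSw_inv : Function.Involutive (auxSw (d := d) orient S) := by
  rintro ⟨x, y⟩
  refine Prod.ext ?_ ?_ <;> funext e <;> refine Prod.ext ?_ ?_ <;>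
    simp only [auxSw] <;> split_ifs <;> rfl

theorem auxpt_trace (M N : Matrix (E → Fin d × Fin d) (E → Fin d × Fin d) ℂ) :
    (ptParty E orient S M * N).trace = (M * ptParty E orient S N).trace := by
  simp only [Matrix.trace, Matrix.diag_apply, Matrix.mul_apply]
  rw [← Finset.sum_product', ← Finset.sum_product']
  refine Finset.sum_equiv (Function.Involutive.toPerm _ (auxSw_inv orient S)) (by simp) ?_
  rintro ⟨x, y⟩ _
  have h := auxSw_inv (d := d) orient S (y, x)
  simp only [Function.Involutive.coe_toPerm]
  change M (auxSw orient S (x, y)).1 (auxSw orient S (x, y)).2 * N y x =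
    M (auxSw orient S (x, y)).1 (auxSw orient S (x, y)).2 * 
      N (auxSw orient S (auxSw orient S (y, x))).1 (auxSw orient S (auxSw orient S (y, x))).2
  rw [h]

theorem auxpt_inv (M : Matrix (E → Fin d × Fin d) (E → Fin d × Fin d) ℂ) :
    ptParty E orient S (ptParty E orient S M) = M := by
  ext x y
  have h := auxSw_inv (d := d) orient S (x, y)
  change M (auxSw orient S (auxSw orient S (x, y))).1 (auxSw orient S (auxSw orient S (x, y))).2 = _
  rw [h]

end pt
section lower
variable {d : ℕ} {V E : Type*} [DecidableEq V] [Fintype E] [DecidableEq E] (orient : E → V × V)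

/-- (d+1)^(1-n) -/
noncomputable def auxg (d : ℕ) (E : Type*) [Fintype E] : ℝ :=
  ((d : ℝ) + 1) / ((d : ℝ) + 1) ^ (Fintype.card E)

theorem auxg_pos : 0 < auxg d E := by
  unfold auxg; positivity

theorem auxg_mul (e0 : E) : auxg d E * ∏ _e ∈ Finset.univ.erase e0, ((d : ℝ) + 1) = 1 := by
  have h : 0 < ((d : ℝ) + 1) := by positivity
  have h2 : 0 < ∏ _e ∈ Finset.univ.erase e0, ((d : ℝ) + 1) := Finset.prod_pos fun _ _ => h
  unfold auxg
  rw [aux_pow_erase e0]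
  field_simp

theorem auxWE_eq : WE d E = ((-d : ℝ) : ℂ) • auxT (fun _ : E => ((1 : ℝ) : ℂ) • phiM d
      + ((0 : ℝ) : ℂ) • (1 - phiM d))
    + ((auxg d E / 2 : ℝ) : ℂ) • auxT (fun _ : E => ((d + 1 : ℝ) : ℂ) • phiM d
      + ((1 : ℝ) : ℂ) • (1 - phiM d)) := by
  have hd : ((d : ℂ) + 1) ≠ 0 := by norm_cast
  have h1 : (((d : ℂ) + 1) ^ ((1 : ℤ) - (Fintype.card E : ℤ)) / 2) = ((auxg d E / 2 : ℝ) : ℂ) := by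
    rw [zpow_sub₀ hd, auxg]; push_cast; simp
  have h2 : ((d + 1 : ℝ) : ℂ) • phiM d + ((1 : ℝ) : ℂ) • (1 - phiM d) = 1 + (d : ℂ) • phiM d := by
    push_cast; module
  have h3 : ((1 : ℝ) : ℂ) • phiM d + ((0 : ℝ) : ℂ) • (1 - phiM d) = phiM d := by
    push_cast; module
  rw [h2, h3, ← h1]
  unfold WE
  push_cast
  rfl

theorem aux_lower (hd : 2 ≤ d) (S : Finset V) (e0 : E)
    (he0 : ¬ ((orient e0).1 ∈ S ↔ (orient e0).2 ∈ S))
    (σ : Matrix (E → Fin d × Fin d) (E → Fin d × Fin d) ℂ) (hσ : σ.PosSemidef) :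
    -((WE d E * σ).trace.re) ≤ negSum (ptParty E orient S σ) := by
  have hdR : (2 : ℝ) ≤ d := by exact_mod_cast hd
  have hd0 : (d : ℝ) ≠ 0 := by positivity
  set g := auxg d E with hg
  have hgp : 0 < g := auxg_pos
  set u : E → ℝ := fun e => if e = e0 then -d / 2 else d with hu
  set v : E → ℝ := fun e => if e = e0 then 1 / 2 else 1 with hv
  set T := auxT (fun e => (u e : ℂ) • phiM d + (v e : ℂ) • (1 : Matrix (Fin d × Fin d) (Fin d × Fin d) ℂ)) with hT
  set c : E → Prop := fun e => ¬ ((orient e).1 ∈ S ↔ (orient e).2 ∈ S) with hc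
  set a : E → ℝ := fun e => if c e then v e + u e / d else v e + u e with ha
  set b : E → ℝ := fun e => if c e then v e - u e / d else v e with hb
  have hptT : ptParty E orient S T = auxT (fun e => (a e : ℂ) • auxP d (c e) + (b e : ℂ) • (1 - auxP d (c e))) := by
    rw [hT, auxpt_T]
    congr 1
    ext1 e
    rw [auxL_eq hd _ _ (c e) Iff.rfl (u e) (v e)]
    simp only [ha, hb]
    congr
  have hc0 : c e0 := he0
  have ha0 : a e0 = 0 := by
    simp only [ha, hu, hv, if_pos hc0, if_true]; field_simp; ring
  have hb0 : b e0 = 1 := by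
    simp only [hb, hu, hv, if_pos hc0, if_true]; field_simp; ring
  have ha1 : ∀ e, e ≠ e0 → 0 ≤ a e ∧ a e ≤ d + 1 := by
    intro e he
    simp only [ha, hu, hv, if_neg he]
    split_ifs
    · rw [div_self hd0]; constructor <;> linarith
    · constructor <;> linarith
  have hb1 : ∀ e, e ≠ e0 → 0 ≤ b e ∧ b e ≤ d + 1 := by
    intro e he
    simp only [hb, hu, hv, if_neg he]
    split_ifs
    · rw [div_self hd0]; constructor <;> linarith
    · constructor <;> linarith
  have hpP : ∀ e, AuxProj (auxP d (c e)) := fun e => auxP_proj hd _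
  set Q := (g : ℂ) • ptParty E orient S T with hQ
  have hQpsd : Q.PosSemidef := by
    rw [hQ, hptT]
    refine (aux_psd_comb1 a b _ _ hpP (fun e => (hpP e).compl) ?_ ?_).smul
      (by exact_mod_cast hgp.le)
    · intro e
      by_cases he : e = e0
      · rw [he, ha0]
      · exact (ha1 e he).1
    · intro e
      by_cases he : e = e0
      · rw [he, hb0]; norm_num
      · exact (hb1 e he).1
  have hQ1 : (1 - Q).PosSemidef := by
    have := aux_psd_comb2 1 (-g) (fun _ => 1) (fun _ => 1) a b _ _ hpP (fun e => (hpP e).compl) (by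
      intro s
      have h1 : (∏ e, (if e ∈ s then a e else b e)) ≤ ∏ _e ∈ Finset.univ.erase e0, ((d : ℝ) + 1) := by
        rw [aux_prod_split e0]
        have h2 : ∏ e ∈ Finset.univ.erase e0, (if e ∈ s then a e else b e) ≤
            ∏ _e ∈ Finset.univ.erase e0, ((d : ℝ) + 1) := by
          refine Finset.prod_le_prod ?_ ?_
          · intro e he
            have he' := Finset.ne_of_mem_erase he
            split_ifs
            · exact (ha1 e he').1
            · exact (hb1 e he').1
          · intro e he
            have he' := Finset.ne_of_mem_erase he
            split_ifs
            · exact (ha1 e he').2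
            · exact (hb1 e he').2
        have h3 : 0 ≤ ∏ _e ∈ Finset.univ.erase e0, ((d : ℝ) + 1) :=
          Finset.prod_nonneg fun _ _ => by positivity
        rw [ha0, hb0]
        split_ifs
        · simpa using h3
        · simpa using h2
      have h4 := mul_le_mul_of_nonneg_left h1 hgp.le
      rw [hg, auxg_mul e0] at h4
      simp only [ite_self, Finset.prod_const_one]
      linarith)
    convert this using 1
    rw [hQ, hptT]
    have h5 : ∀ e : E, ((1 : ℝ) : ℂ) • auxP d (c e) + ((1 : ℝ) : ℂ) • (1 - auxP d (c e)) = 1 := by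
      intro e; push_cast; module
    simp only [h5, auxT_one]
    push_cast
    module
  have hph := aux_phi_proj hd
  have hPpsd : (WE d E - (g : ℂ) • T).PosSemidef := by
    have := aux_psd_comb (-d) (g / 2) (-g) (fun _ : E => 1) (fun _ => 0) (fun _ => d + 1) (fun _ => 1)
      (fun e => v e + u e) v (fun _ => phiM d) (fun _ => 1 - phiM d) (fun _ => hph)
      (fun _ => hph.compl) (by
        intro s
        rw [aux_prod_split e0 (fun e => if e ∈ s then (d : ℝ) + 1 else 1),
          aux_prod_split e0 (fun e => if e ∈ s then v e + u e else v e)]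
        have h1 : ∏ e ∈ Finset.univ.erase e0, (if e ∈ s then v e + u e else v e) =
            ∏ e ∈ Finset.univ.erase e0, (if e ∈ s then (d : ℝ) + 1 else 1) := by
          refine Finset.prod_congr rfl fun e he => ?_
          have he' := Finset.ne_of_mem_erase he
          simp only [hu, hv, if_neg he']
          rw [add_comm]
        rw [h1]
        set X := ∏ e ∈ Finset.univ.erase e0, (if e ∈ s then (d : ℝ) + 1 else 1) with hX
        have hXp : 0 ≤ X := Finset.prod_nonneg fun e _ => by split_ifs <;> positivity
        simp only [hu, hv, if_true]
        by_cases hs : e0 ∈ s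
        · simp only [if_pos hs]
          by_cases hall : ∀ e, e ∈ s
          · simp only [hall, if_true, Finset.prod_const_one] at hX ⊢
            have := auxg_mul (d := d) e0
            rw [← hX, ← hg] at this
            nlinarith
          · push Not at hall
            obtain ⟨e1, he1⟩ := hall
            rw [Finset.prod_eq_zero (Finset.mem_univ e1) (by simp [he1])]
            have : 0 ≤ g * X * d := by positivity
            nlinarith
        · simp only [if_neg hs]
          rw [Finset.prod_eq_zero (Finset.mem_univ e0) (by simp [hs])]
          nlinarith)
    convert this using 1
    rw [auxWE_eq]
    have h6 : ∀ e, ((v e + u e : ℝ) : ℂ) • phiM d + ((v e : ℝ) : ℂ) • (1 - phiM d) =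
      (u e : ℂ) • phiM d + (v e : ℂ) • (1 : Matrix (Fin d × Fin d) (Fin d × Fin d) ℂ) := by
      intro e; push_cast; module
    simp only [h6]
    rw [← hT, ← hg]
    push_cast
    module
  have key : (WE d E * σ).trace = ((WE d E - (g : ℂ) • T) * σ).trace
      + (Q * ptParty E orient S σ).trace := by
    rw [hQ, ← auxpt_smul, auxpt_trace, auxpt_inv, ← Matrix.trace_add, ← Matrix.add_mul]
    simp
  have h7 := aux_psd_trace_mul _ _ hPpsd hσ
  have h8 := aux_negSum_ge _ Q (auxpt_herm orient S σ hσ.1) hQpsd hQ1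
  rw [key, Complex.add_re]
  linarith

end lower
section upper
variable {d : ℕ} {V E : Type*} [Fintype V] [DecidableEq V] [Fintype E] [DecidableEq E]
  (orient : E → V × V)

/-- kappa_B -/
noncomputable def auxk (d : ℕ) (B : Finset E) : ℝ :=
  (((d : ℝ) + 1) / (d - 1)) * ∏ e, (if e ∈ B then 1 / ((d : ℝ) + 1) else 1)

/-- normalized complement of Φ -/
noncomputable def auxeta (d : ℕ) : Matrix (Fin d × Fin d) (Fin d × Fin d) ℂ :=
  ((-1 / ((d : ℝ) ^ 2 - 1) : ℝ) : ℂ) • phiM d + ((1 / ((d : ℝ) ^ 2 - 1) : ℝ) : ℂ) • 1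

/-- zeta_B -/
noncomputable def auxz (d : ℕ) (B : Finset E) : Matrix (E → Fin d × Fin d) (E → Fin d × Fin d) ℂ :=
  auxT fun e => if e ∈ B then auxeta d else phiM d

/-- Φ_E -/
noncomputable def auxPhi (d : ℕ) (E : Type*) [Fintype E] :
    Matrix (E → Fin d × Fin d) (E → Fin d × Fin d) ℂ :=
  auxT fun _ : E => phiM d

theorem auxk_pos (hd : 2 ≤ d) (B : Finset E) : 0 < auxk d B := by
  have hdR : (2 : ℝ) ≤ d := by exact_mod_cast hd
  have : (0 : ℝ) < d - 1 := by linarith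
  unfold auxk
  refine mul_pos (by positivity) (Finset.prod_pos fun e _ => ?_)
  split_ifs <;> positivity

theorem auxeta_trace (hd : 2 ≤ d) : (auxeta d).trace = 1 := by
  have hdR : (2 : ℝ) ≤ d := by exact_mod_cast hd
  have h : ((d : ℝ) ^ 2 - 1) ≠ 0 := by nlinarith
  have h' : ((d : ℂ) ^ 2 - 1) ≠ 0 := by exact_mod_cast h
  rw [auxeta, Matrix.trace_add, Matrix.trace_smul, Matrix.trace_smul, aux_phi_trace hd,
    aux_one_trace]
  push_cast
  simp only [smul_eq_mul]
  field_simp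
  ring

theorem auxeta_eq (d : ℕ) : auxeta d = ((0 : ℝ) : ℂ) • phiM d +
    ((1 / ((d : ℝ) ^ 2 - 1) : ℝ) : ℂ) • (1 - phiM d) := by
  rw [auxeta]; push_cast; module

theorem auxPhi_psd (hd : 2 ≤ d) : (auxPhi d E).PosSemidef :=
  (auxT_proj _ fun _ => aux_phi_proj hd).psd

theorem auxPhi_trace (hd : 2 ≤ d) : (auxPhi d E).trace = 1 := by
  rw [auxPhi, auxT_trace]; simp [aux_phi_trace hd]

theorem auxz_trace (hd : 2 ≤ d) (B : Finset E) : (auxz d B).trace = 1 := by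
  rw [auxz, auxT_trace]
  refine Finset.prod_eq_one fun e _ => ?_
  split_ifs
  · exact auxeta_trace hd
  · exact aux_phi_trace hd

theorem auxz_psd (hd : 2 ≤ d) (B : Finset E) : (auxz d B).PosSemidef := by
  have hdR : (2 : ℝ) ≤ d := by exact_mod_cast hd
  have h : 0 < ((d : ℝ) ^ 2 - 1) := by nlinarith
  have := aux_psd_comb1 (E := E) (fun e => if e ∈ B then 0 else 1)
    (fun e => if e ∈ B then 1 / ((d : ℝ) ^ 2 - 1) else 0) (fun _ => phiM d) (fun _ => 1 - phiM d)
    (fun _ => aux_phi_proj hd) (fun _ => (aux_phi_proj hd).compl)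
    (fun e => by split_ifs <;> norm_num)
    (fun e => by split_ifs <;> positivity)
  convert this using 1
  rw [auxz]; congr 1; ext1 e
  split_ifs
  · exact auxeta_eq d
  · push_cast; module

/-- the states in the optimal decomposition -/
noncomputable def auxsig (d : ℕ) (t : ℝ) (B : Finset E) :
    Matrix (E → Fin d × Fin d) (E → Fin d × Fin d) ℂ :=
  (((1 + t * auxk d B)⁻¹ : ℝ) : ℂ) • (auxz d B + ((t * auxk d B : ℝ) : ℂ) • auxPhi d E)

theorem auxsig_state (hd : 2 ≤ d) (t : ℝ) (ht : 0 ≤ t) (B : Finset E) : IsState (auxsig d t B) := by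
  have hk := mul_nonneg ht (auxk_pos hd B).le
  constructor
  · refine ((auxz_psd hd B).add ((auxPhi_psd hd).smul ?_)).smul ?_
    · exact_mod_cast hk
    · have : 0 ≤ (1 + t * auxk d B)⁻¹ := by positivity
      exact_mod_cast this
  · rw [auxsig, Matrix.trace_smul, Matrix.trace_add, Matrix.trace_smul, auxz_trace hd,
      auxPhi_trace hd]
    have : (1 + t * auxk d B) ≠ 0 := by positivity
    rw [smul_eq_mul, smul_eq_mul]
    norm_cast
    field_simp

theorem aux_ppt (hd : 2 ≤ d) (t : ℝ) (ht : 0 ≤ t) (ht1 : t ≤ 1) (B : Finset E) (S : Finset V)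
    (hS : ∀ e, e ∈ B ↔ ¬ ((orient e).1 ∈ S ↔ (orient e).2 ∈ S)) :
    (ptParty E orient S (auxsig d t B)).PosSemidef := by
  have hdR : (2 : ℝ) ≤ d := by exact_mod_cast hd
  have h1 : 0 < (d : ℝ) - 1 := by linarith
  have h2 : 0 < ((d : ℝ) ^ 2 - 1) := by nlinarith
  have hk := auxk_pos hd B
  have hk' := mul_nonneg ht hk.le
  rw [auxsig, auxpt_smul]
  refine Matrix.PosSemidef.smul ?_ (by
    have : 0 ≤ (1 + t * auxk d B)⁻¹ := by positivity
    exact_mod_cast this)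
  rw [auxpt_add, auxpt_smul, auxz, auxPhi, auxpt_T, auxpt_T]
  set x : ℝ := 1 / (d * (d + 1)) with hx
  set y : ℝ := 1 / (d * (d - 1)) with hy
  have hx0 : 0 < x := by positivity
  have hy0 : 0 < y := by positivity
  have hxy : x ≤ y := by
    rw [hx, hy]; gcongr; linarith
  have hyx : y = ((d : ℝ) + 1) / (d - 1) * x := by
    rw [hx, hy]; field_simp
  have hpP : ∀ e, AuxProj (auxP d (e ∈ B)) := fun e => auxP_proj hd _
  have := aux_psd_comb2 1 (t * auxk d B) (fun e => if e ∈ B then x else 1)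
    (fun e => if e ∈ B then y else 0) (fun e => if e ∈ B then 1 / (d : ℝ) else 1)
    (fun e => if e ∈ B then - (1 / (d : ℝ)) else 0) (fun e => auxP d (e ∈ B))
    (fun e => 1 - auxP d (e ∈ B)) hpP (fun e => (hpP e).compl) (by
      intro s
      by_cases hz : ∃ e, e ∉ B ∧ e ∉ s
      · obtain ⟨e, he, hes⟩ := hz
        rw [Finset.prod_eq_zero (Finset.mem_univ e) (by simp [he, hes]),
          Finset.prod_eq_zero (Finset.mem_univ e) (by simp [he, hes])]
        simp
      push Not at hz
      by_cases hBs : ∃ e, e ∈ B ∧ e ∉ s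
      · obtain ⟨e1, he1, hes1⟩ := hBs
        have hA : ((d : ℝ) + 1) / (d - 1) * ∏ e, (if e ∈ B then x else 1) ≤
            ∏ e, (if e ∈ s then (if e ∈ B then x else 1) else (if e ∈ B then y else 0)) := by
          rw [aux_prod_split e1, aux_prod_split e1 (fun e => if e ∈ s then _ else _)]
          rw [if_pos he1, if_neg hes1, if_pos he1, ← mul_assoc, ← hyx]
          refine mul_le_mul_of_nonneg_left (Finset.prod_le_prod ?_ ?_) hy0.le
          · intro e _; split_ifs <;> positivity
          · intro e _
            by_cases heB : e ∈ B
            · simp only [heB, if_true]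
              split_ifs
              · exact le_rfl
              · exact hxy
            · simp [heB, hz e heB]
        have hB : |∏ e, (if e ∈ s then (if e ∈ B then 1 / (d : ℝ) else 1) else
            (if e ∈ B then - (1 / (d : ℝ)) else 0))| ≤ ∏ e, (if e ∈ B then 1 / (d : ℝ) else 1) := by
          rw [Finset.abs_prod]
          refine Finset.prod_le_prod (fun _ _ => abs_nonneg _) ?_
          intro e _
          have : |1 / (d : ℝ)| = 1 / d := abs_of_nonneg (by positivity)
          split_ifs <;> simp
        have hC : auxk d B * ∏ e, (if e ∈ B then 1 / (d : ℝ) else 1) =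
            ((d : ℝ) + 1) / (d - 1) * ∏ e, (if e ∈ B then x else 1) := by
          rw [auxk, mul_assoc, ← Finset.prod_mul_distrib]
          congr 1
          refine Finset.prod_congr rfl fun e _ => ?_
          split_ifs
          · rw [hx]; field_simp
          · simp
        have hB' := (abs_le.1 hB).1
        have hD : 0 ≤ ∏ e, (if e ∈ B then 1 / (d : ℝ) else 1) :=
          Finset.prod_nonneg fun e _ => by split_ifs <;> positivity
        have h5 := mul_le_mul_of_nonneg_left hB' hk'
        have h6 : t * auxk d B * ∏ e, (if e ∈ B then 1 / (d : ℝ) else 1) ≤ 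
          1 * (auxk d B * ∏ e, (if e ∈ B then 1 / (d : ℝ) else 1)) := by
          rw [mul_assoc]
          exact mul_le_mul_of_nonneg_right ht1 (mul_nonneg hk.le hD)
        linarith
      · push Not at hBs
        refine add_nonneg (mul_nonneg zero_le_one ?_) (mul_nonneg hk' ?_)
        · refine Finset.prod_nonneg fun e _ => ?_
          split_ifs <;> positivity
        · refine Finset.prod_nonneg fun e _ => ?_
          by_cases heB : e ∈ B
          · simp [hBs e heB, heB]
          · simp [hz e heB, heB])
  convert this using 1
  rw [Complex.ofReal_one, one_smul]
  congr 1
  · congr 1; ext1 e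
    have hS' := hS e
    by_cases he : e ∈ B
    · simp only [if_pos he]
      rw [auxeta, auxL_eq hd _ _ _ hS']
      simp only [if_pos he]
      congr 3
      · rw [hx]
        have : (d : ℝ) ^ 2 - 1 = (d - 1) * (d + 1) := by ring
        rw [this]; field_simp; ring
      · rw [hy]
        have : (d : ℝ) ^ 2 - 1 = (d - 1) * (d + 1) := by ring
        rw [this]; field_simp; ring
    · simp only [if_neg he]
      rw [auxL_phi_same _ _ (by tauto)]
      simp [auxP, he]
  · congr 2; ext1 e
    have hS' := hS e
    have h0 : phiM d = ((1 : ℝ) : ℂ) • phiM d + ((0 : ℝ) : ℂ) • 1 := by push_cast; module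
    conv_lhs => rw [h0]
    rw [auxL_eq hd _ _ _ hS']
    by_cases he : e ∈ B
    · simp [he]
    · simp [he]

theorem aux_negPhi (hd : 2 ≤ d) (e0 : E) (S : Finset V)
    (hS : ∀ e, e = e0 ↔ ¬ ((orient e).1 ∈ S ↔ (orient e).2 ∈ S)) :
    negSum (ptParty E orient S (auxPhi d E)) ≤ ((d : ℝ) - 1) / 2 := by
  have hdR : (2 : ℝ) ≤ d := by exact_mod_cast hd
  have hd0 : (d : ℂ) ≠ 0 := by norm_cast; omega
  set f : E → Matrix (Fin d × Fin d) (Fin d × Fin d) ℂ := fun e =>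
    (((if e = e0 then 1 / d else 1 : ℝ)) : ℂ) • auxP d (e = e0) + ((0 : ℝ) : ℂ) • (1 - auxP d (e = e0))
    with hf
  set h : E → Matrix (Fin d × Fin d) (Fin d × Fin d) ℂ := fun e =>
    (((if e = e0 then 0 else 1 : ℝ)) : ℂ) • auxP d (e = e0) +
      (((if e = e0 then 1 / d else 0 : ℝ)) : ℂ) • (1 - auxP d (e = e0)) with hh
  have hpP : ∀ e, AuxProj (auxP d (e = e0)) := fun e => auxP_proj hd _
  have h1 : ptParty E orient S (auxPhi d E) + auxT h = auxT f := by
    rw [auxPhi, auxpt_T]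
    have h0 : phiM d = ((1 : ℝ) : ℂ) • phiM d + ((0 : ℝ) : ℂ) • 1 := by push_cast; module
    refine auxT_split e0 _ _ _ ?_ ?_ ?_
    · rw [h0, auxL_eq hd _ _ _ (hS e0)]
      simp only [hh, hf, if_true]
      push_cast
      module
    · intro e he
      rw [auxL_phi_same _ _ (by have := hS e; tauto)]
      simp [hf, he, auxP]
    · intro e he
      simp [hf, hh, he]
  have h2 : ptParty E orient S (auxPhi d E) = auxT f - auxT h := by rw [← h1]; simp
  have hfp : (auxT f).PosSemidef := aux_psd_comb1 _ _ _ _ hpP (fun e => (hpP e).compl)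
    (fun e => by split_ifs <;> positivity) (fun e => le_rfl)
  have hhp : (auxT h).PosSemidef := aux_psd_comb1 _ _ _ _ hpP (fun e => (hpP e).compl)
    (fun e => by split_ifs <;> positivity) (fun e => by split_ifs <;> positivity)
  rw [h2]
  refine (aux_negSum_le _ _ hfp hhp).trans (le_of_eq ?_)
  have h3 : (auxT h).trace = (((d : ℝ) - 1) / 2 : ℝ) := by
    rw [auxT_trace, Finset.prod_eq_single e0]
    · simp only [hh, auxP, if_true, auxS]
      rw [Matrix.trace_add, Matrix.trace_smul, Matrix.trace_smul, Matrix.trace_smul, Matrix.trace_sub,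
        Matrix.trace_smul, Matrix.trace_add, aux_one_trace, auxF_trace]
      push_cast
      simp only [smul_eq_mul]
      field_simp
      ring
    · intro e _ he
      simp [hh, he, auxP, aux_phi_trace hd]
    · simp
  rw [h3, Complex.ofReal_re]

theorem aux_ipen_expand (hd : 2 ≤ d) (p f : ℝ) (hf : f = p + (1 - p) / (d : ℝ) ^ 2) :
    ipen d E p = ∑ B : Finset E, ((∏ e, (if e ∈ B then 1 - f else f) : ℝ) : ℂ) • auxz d B := by
  have hdR : (2 : ℝ) ≤ d := by exact_mod_cast hd
  have h2 : ((d : ℝ) ^ 2 - 1) ≠ 0 := by nlinarith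
  have hd0 : (d : ℝ) ≠ 0 := by positivity
  have := auxT_expand (fun _ : E => 1 - f) (fun _ => f) (fun _ => auxeta d) (fun _ => phiM d)
  refine Eq.trans ?_ this
  have h3 : ((1 - f : ℝ) : ℂ) • auxeta d + (f : ℂ) • phiM d =
      (p : ℂ) • phiM d + ((1 - (p : ℂ)) / (d : ℂ) ^ 2) •
      (1 : Matrix (Fin d × Fin d) (Fin d × Fin d) ℂ) := by
    have e1 : (1 - f) * (-1 / ((d : ℝ) ^ 2 - 1)) + f = p := by
      rw [hf]; field_simp; ring
    have e2 : (1 - f) * (1 / ((d : ℝ) ^ 2 - 1)) = (1 - p) / (d : ℝ) ^ 2 := by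
      rw [hf]; field_simp; ring
    have e2' : ((1 - (p : ℂ)) / (d : ℂ) ^ 2) = (((1 - f) * (1 / ((d : ℝ) ^ 2 - 1)) : ℝ) : ℂ) := by
      rw [e2]; push_cast; rfl
    rw [e2']
    conv_rhs => rw [← e1]
    rw [auxeta]
    push_cast
    module
  simp only [h3]
  rfl

theorem aux_trace_W (hd : 2 ≤ d) (p f : ℝ) (hf : f = p + (1 - p) / (d : ℝ) ^ 2) :
    (WE d E * ipen d E p).trace.re =
      -(d * f ^ (Fintype.card E)) + auxg d E / 2 * (1 + d * f) ^ (Fintype.card E) := by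
  have hdR : (2 : ℝ) ≤ d := by exact_mod_cast hd
  have hd0 : (d : ℂ) ≠ 0 := by norm_cast; omega
  have hi : ipen d E p = auxT (fun _ : E => (p : ℂ) • phiM d + ((1 - (p : ℂ)) / (d : ℂ) ^ 2) •
      (1 : Matrix (Fin d × Fin d) (Fin d × Fin d) ℂ)) := rfl
  have ht : ∀ a b : ℝ, (((a : ℂ) • phiM d + (b : ℂ) • (1 - phiM d)) *
      ((p : ℂ) • phiM d + ((1 - (p : ℂ)) / (d : ℂ) ^ 2) •
      (1 : Matrix (Fin d × Fin d) (Fin d × Fin d) ℂ))).trace = ((a * f + b * (1 - f) : ℝ) : ℂ) := by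
    intro a b
    have hp2 := (aux_phi_proj hd).2
    simp only [Matrix.add_mul, Matrix.mul_add, Matrix.smul_mul, Matrix.mul_smul, Matrix.sub_mul,
      hp2, Matrix.one_mul, Matrix.mul_one, Matrix.trace_add, Matrix.trace_sub, Matrix.trace_smul,
      aux_phi_trace hd, aux_one_trace, smul_eq_mul]
    rw [hf]; push_cast; field_simp; ring
  rw [auxWE_eq, hi, Matrix.add_mul, Matrix.smul_mul, Matrix.smul_mul, auxT_mul, auxT_mul,
    Matrix.trace_add, Matrix.trace_smul, Matrix.trace_smul, auxT_trace, auxT_trace]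
  simp only [ht, Finset.prod_const, smul_eq_mul, Finset.card_univ]
  have hfin : ∀ r : ℝ, ∀ z : ℂ, z = (r : ℂ) → z.re = r := fun r z h => by rw [h]; simp
  apply hfin
  push_cast
  congr 2
  · ring
  · congr 1; ring

theorem aux_mem (ρ : Matrix (E → Fin d × Fin d) (E → Fin d × Fin d) ℂ)
    {ι : Type*} [Fintype ι] (S : ι → Finset V) (w : ι → ℝ)
    (σ : ι → Matrix (E → Fin d × Fin d) (E → Fin d × Fin d) ℂ)
    (h1 : ∀ k, (S k).Nonempty) (h2 : ∀ k, S k ≠ Finset.univ) (h3 : ∀ k, 0 ≤ w k)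
    (h4 : ∀ k, IsState (σ k)) (h5 : ρ = ∑ k, (w k : ℂ) • σ k) :
    GMEnegNet d E orient ρ ≤ ∑ k, w k * negSum (ptParty E orient (S k) (σ k)) := by
  refine csInf_le ⟨0, ?_⟩ ?_
  · rintro r ⟨m, S, p, σ, -, -, hp, -, -, rfl⟩
    exact Finset.sum_nonneg fun k _ => mul_nonneg (hp k) (aux_negSum_nonneg _)
  · let q := (Fintype.equivFin ι).symm
    refine ⟨Fintype.card ι, S ∘ q, w ∘ q, σ ∘ q, fun k => h1 _, fun k => h2 _, fun k => h3 _,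
      fun k => h4 _, ?_, ?_⟩
    · rw [h5]
      exact (Equiv.sum_comp q (fun k => (w k : ℂ) • σ k)).symm
    · exact (Equiv.sum_comp q (fun k => w k * negSum (ptParty E orient (S k) (σ k)))).symm

theorem aux_upper (hd : 2 ≤ d) [Nonempty E] (p f : ℝ) (hf : f = p + (1 - p) / (d : ℝ) ^ 2)
    (hf0 : 0 ≤ f) (hf1 : f ≤ 1) (t : ℝ) (ht0 : 0 ≤ t) (ht1 : t ≤ 1)
    (hreal : ∀ B : Finset E, B.Nonempty → ∃ S : Finset V, S.Nonempty ∧ S ≠ Finset.univ ∧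
      ∀ e, e ∈ B ↔ ¬ ((orient e).1 ∈ S ↔ (orient e).2 ∈ S))
    (C : ℝ) (hC : C = ∑ B ∈ Finset.univ.erase (∅ : Finset E), (∏ e, (if e ∈ B then 1 - f else f)) * auxk d B)
    (htC : t * C ≤ f ^ (Fintype.card E)) :
    GMEnegNet d E orient (ipen d E p) ≤ (f ^ (Fintype.card E) - t * C) * ((d - 1) / 2) := by
  have e0 : E := Classical.arbitrary E
  have hreal' : ∀ B : Finset E, ∃ S : Finset V, S.Nonempty ∧ S ≠ Finset.univ ∧
      ∀ e, e ∈ (if B = ∅ then {e0} else B) ↔ ¬ ((orient e).1 ∈ S ↔ (orient e).2 ∈ S) := by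
    intro B
    apply hreal
    split_ifs with h
    · simp
    · exact Finset.nonempty_iff_ne_empty.2 h
  choose S hS1 hS2 hS3 using hreal'
  set w : Finset E → ℝ := fun B => ∏ e, (if e ∈ B then 1 - f else f) with hw
  have hw0 : ∀ B, 0 ≤ w B := fun B => Finset.prod_nonneg fun e _ => by
    split_ifs <;> linarith
  have hwe : w ∅ = f ^ (Fintype.card E) := by simp [hw]
  have hz : auxz d (∅ : Finset E) = auxPhi d E := by simp [auxz, auxPhi]
  have h := aux_mem orient (ipen d E p) S
    (fun B => if B = ∅ then f ^ (Fintype.card E) - t * C else w B * (1 + t * auxk d B))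
    (fun B => if B = ∅ then auxPhi d E else auxsig d t B) hS1 hS2 (by
      intro B
      split_ifs
      · linarith
      · have := auxk_pos hd B
        have := hw0 B
        positivity) (by
      intro B
      split_ifs
      · exact ⟨auxPhi_psd hd, auxPhi_trace hd⟩
      · exact auxsig_state hd t ht0 B) (by
      rw [aux_ipen_expand hd p f hf]
      rw [← Finset.add_sum_erase _ _ (Finset.mem_univ (∅ : Finset E)),
        ← Finset.add_sum_erase _ _ (Finset.mem_univ (∅ : Finset E))]
      simp only [if_true]
      have h1 : ∑ B ∈ Finset.univ.erase (∅ : Finset E),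
          (((if B = ∅ then f ^ (Fintype.card E) - t * C else w B * (1 + t * auxk d B) : ℝ)) : ℂ) •
            (if B = ∅ then auxPhi d E else auxsig d t B) =
          ∑ B ∈ Finset.univ.erase (∅ : Finset E), (((w B : ℝ) : ℂ) • auxz d B +
            ((t * (w B * auxk d B) : ℝ) : ℂ) • auxPhi d E) := by
        refine Finset.sum_congr rfl fun B hB => ?_
        rw [if_neg (Finset.ne_of_mem_erase hB), if_neg (Finset.ne_of_mem_erase hB), auxsig,
          smul_smul, ← Complex.ofReal_mul]
        have : 1 + t * auxk d B ≠ 0 := by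
          have := auxk_pos hd B
          positivity
        rw [mul_assoc, mul_inv_cancel₀ this, mul_one, smul_add, smul_smul, ← Complex.ofReal_mul]
        congr 3
        ring
      rw [h1, Finset.sum_add_distrib, ← Finset.sum_smul, ← Complex.ofReal_sum, ← Finset.mul_sum,
        ← hC, hz]
      generalize hX : ∑ B ∈ Finset.univ.erase (∅ : Finset E), ((w B : ℝ) : ℂ) • auxz d B = X
      change ((w ∅ : ℝ) : ℂ) • _ + X = _
      rw [hwe]
      push_cast
      module)
  refine h.trans ?_
  rw [← Finset.add_sum_erase _ _ (Finset.mem_univ (∅ : Finset E)), Finset.sum_eq_zero, add_zero]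
  · simp only [if_true]
    refine mul_le_mul_of_nonneg_left ?_ (by linarith)
    apply aux_negPhi orient hd e0
    intro e
    simpa using hS3 ∅ e
  · intro B hB
    have hB' := Finset.ne_of_mem_erase hB
    have h3 := hS3 B
    simp only [if_neg hB'] at h3 ⊢
    rw [aux_negSum_psd _ (aux_ppt orient hd t ht0 ht1 B (S B) h3), mul_zero]

theorem aux_core (hd : 2 ≤ d) [Nonempty E] (p : ℝ) (hp0 : 0 ≤ p) (hp1 : p ≤ 1)
    (hcut : ∀ S : Finset V, S.Nonempty → S ≠ Finset.univ →
      ∃ e, ¬ ((orient e).1 ∈ S ↔ (orient e).2 ∈ S))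
    (hreal : ∀ B : Finset E, B.Nonempty → ∃ S : Finset V, S.Nonempty ∧ S ≠ Finset.univ ∧
      ∀ e, e ∈ B ↔ ¬ ((orient e).1 ∈ S ↔ (orient e).2 ∈ S)) :
    GMEnegNet d E orient (ipen d E p) = max 0 (-((WE d E * ipen d E p).trace.re)) := by
  have hdR : (2 : ℝ) ≤ d := by exact_mod_cast hd
  have hd1 : (0 : ℝ) < d - 1 := by linarith
  obtain ⟨f, hf⟩ : ∃ f : ℝ, f = p + (1 - p) / (d : ℝ) ^ 2 := ⟨_, rfl⟩
  have hq : 0 ≤ (1 - p) / (d : ℝ) ^ 2 := div_nonneg (by linarith) (by positivity)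
  have hq1 : (1 - p) / (d : ℝ) ^ 2 ≤ 1 - p := div_le_self (by linarith) (by nlinarith)
  have hf0 : 0 ≤ f := by rw [hf]; linarith
  have hf1 : f ≤ 1 := by rw [hf]; linarith
  obtain ⟨C, hC⟩ : ∃ C : ℝ, C = ∑ B ∈ Finset.univ.erase (∅ : Finset E),
    (∏ e, (if e ∈ B then 1 - f else f)) * auxk d B := ⟨_, rfl⟩
  have hCv : C * ((d - 1) / 2) = auxg d E / 2 * (1 + d * f) ^ (Fintype.card E)
      - (d + 1) / 2 * f ^ (Fintype.card E) := by
    have h1 : ∑ B : Finset E, (∏ e, (if e ∈ B then 1 - f else f)) * auxk d B =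
        ((d : ℝ) + 1) / (d - 1) * ((1 + d * f) / (d + 1)) ^ (Fintype.card E) := by
      have h2 : ∏ _e : E, ((1 - f) * (1 / ((d : ℝ) + 1)) + f) =
          ((1 + d * f) / (d + 1)) ^ (Fintype.card E) := by
        rw [Finset.prod_const, Finset.card_univ]
        congr 1
        field_simp
        ring
      rw [← h2, Fintype.prod_add, Finset.mul_sum]
      refine Finset.sum_congr rfl fun B _ => ?_
      rw [auxk, mul_left_comm, ← Finset.prod_mul_distrib]
      congr 1
      rw [← Finset.prod_mul_prod_compl B]
      congr 1
      · refine Finset.prod_congr rfl fun e he => ?_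
        simp [he]
      · refine Finset.prod_congr rfl fun e he => ?_
        simp [Finset.mem_compl.1 he]
    rw [← Finset.add_sum_erase _ _ (Finset.mem_univ (∅ : Finset E)), ← hC] at h1
    have h3 : auxk d (∅ : Finset E) = ((d : ℝ) + 1) / (d - 1) := by simp [auxk]
    have h4 : ∏ e : E, (if e ∈ (∅ : Finset E) then 1 - f else f) = f ^ (Fintype.card E) := by simp
    rw [h3, h4] at h1
    have h5 : C = ((d : ℝ) + 1) / (d - 1) * ((1 + d * f) / (d + 1)) ^ (Fintype.card E)
      - f ^ (Fintype.card E) * (((d : ℝ) + 1) / (d - 1)) := by linarith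
    rw [h5, auxg, div_pow]
    field_simp
  have hC0 : 0 ≤ C := by
    rw [hC]
    refine Finset.sum_nonneg fun B _ => mul_nonneg (Finset.prod_nonneg fun e _ => ?_)
      (auxk_pos hd B).le
    split_ifs <;> linarith
  have hfn : 0 ≤ f ^ (Fintype.card E) := by positivity
  have hW := aux_trace_W (E := E) hd p f hf
  have hY : -((WE d E * ipen d E p).trace.re) = (f ^ (Fintype.card E) - C) * ((d - 1) / 2) := by
    rw [hW, sub_mul, hCv]; ring
  have hup := fun t ht0 ht1 => aux_upper orient hd p f hf hf0 hf1 t ht0 ht1 hreal C hC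
  apply le_antisymm
  · by_cases hle : C ≤ f ^ (Fintype.card E)
    · have := hup 1 zero_le_one le_rfl (by linarith)
      rw [one_mul, ← hY] at this
      exact this.trans (le_max_right _ _)
    · push Not at hle
      have hCp : 0 < C := lt_of_le_of_lt hfn hle
      have := hup (f ^ (Fintype.card E) / C) (by positivity) (by rw [div_le_one hCp]; exact hle.le)
        (by rw [div_mul_cancel₀ _ hCp.ne'])
      rw [div_mul_cancel₀ _ hCp.ne', sub_self, zero_mul] at this
      exact this.trans (le_max_left _ _)
  · refine le_csInf ?_ ?_
    · obtain ⟨S, hS1, hS2, -⟩ := hreal Finset.univ Finset.univ_nonempty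
      have hexp := aux_ipen_expand (E := E) hd p f hf
      let q := (Fintype.equivFin (Finset E)).symm
      refine ⟨_, Fintype.card (Finset E), fun _ => S,
        (fun B => ∏ e, (if e ∈ B then 1 - f else f)) ∘ q, auxz d ∘ q, fun _ => hS1, fun _ => hS2,
        fun k => Finset.prod_nonneg fun e _ => by split_ifs <;> linarith,
        fun k => ⟨auxz_psd hd _, auxz_trace hd _⟩, ?_, rfl⟩
      rw [hexp]
      exact (Equiv.sum_comp q (fun B => ((∏ e, (if e ∈ B then 1 - f else f) : ℝ) : ℂ) • auxz d B)).symm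
    · rintro r ⟨m, S, w, σ, h1, h2, h3, h4, h5, rfl⟩
      apply max_le
      · exact Finset.sum_nonneg fun k _ => mul_nonneg (h3 k) (aux_negSum_nonneg _)
      · rw [h5, Matrix.mul_sum, Matrix.trace_sum, Complex.re_sum, ← Finset.sum_neg_distrib]
        refine Finset.sum_le_sum fun k _ => ?_
        rw [Matrix.mul_smul, Matrix.trace_smul, smul_eq_mul, Complex.re_ofReal_mul, ← mul_neg]
        refine mul_le_mul_of_nonneg_left ?_ (h3 k)
        obtain ⟨e0, he0⟩ := hcut (S k) (h1 k) (h2 k)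
        exact aux_lower orient hd (S k) e0 he0 (σ k) (h4 k).1

end upper

theorem aux_graph_cut {V : Type*} [Fintype V] [DecidableEq V] (G : SimpleGraph V)
    (hconn : G.Connected) (orient : ↥G.edgeSet → V × V)
    (horient : ∀ e : ↥G.edgeSet, e.val = s((orient e).1, (orient e).2))
    (S : Finset V) (h1 : S.Nonempty) (h2 : S ≠ Finset.univ) :
    ∃ e, ¬ ((orient e).1 ∈ S ↔ (orient e).2 ∈ S) := by
  obtain ⟨u, hu⟩ := h1
  obtain ⟨v, hv⟩ : ∃ v, v ∉ S := by
    by_contra h; push Not at h; exact h2 (Finset.eq_univ_iff_forall.2 h)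
  obtain ⟨w⟩ := hconn.preconnected u v
  obtain ⟨x, -, hx1, hx2⟩ := w.exists_boundary_dart (↑S) hu hv
  refine ⟨⟨s(x.fst, x.snd), x.adj⟩, ?_⟩
  have h := horient ⟨s(x.fst, x.snd), x.adj⟩
  simp only [Finset.mem_coe] at hx1 hx2
  rcases Sym2.eq_iff.1 h with ⟨ha, hb⟩ | ⟨ha, hb⟩
  · rw [← ha, ← hb]; tauto
  · rw [← ha, ← hb]; tauto

theorem aux_graph_real {V : Type*} [Fintype V] [DecidableEq V] (G : SimpleGraph V)
    (hacyc : G.IsAcyclic) (orient : ↥G.edgeSet → V × V)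
    (horient : ∀ e : ↥G.edgeSet, e.val = s((orient e).1, (orient e).2))
    (B : Finset ↥G.edgeSet) (hB : B.Nonempty) :
    ∃ S : Finset V, S.Nonempty ∧ S ≠ Finset.univ ∧
      ∀ e, e ∈ B ↔ ¬ ((orient e).1 ∈ S ↔ (orient e).2 ∈ S) := by
  let R : ↥G.edgeSet → V → Prop := fun e v => (G.deleteEdges {e.val}).Reachable (orient e).1 v
  let S : Finset V := Finset.univ.filter fun v => Odd (B.filter fun e => R e v).card
  have hR1 : ∀ e, R e (orient e).1 := fun e => SimpleGraph.Reachable.refl _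
  have hR2 : ∀ e, ¬ R e (orient e).2 := by
    intro e
    have h := SimpleGraph.isAcyclic_iff_forall_edge_isBridge.1 hacyc e.2
    have h' := horient e
    rw [h', SimpleGraph.isBridge_iff, ← h'] at h
    exact h
  have hR3 : ∀ e f, e ≠ f → (R e (orient f).1 ↔ R e (orient f).2) := by
    intro e f hef
    have hadj : (G.deleteEdges {e.val}).Adj (orient f).1 (orient f).2 := by
      rw [SimpleGraph.deleteEdges_adj, ← SimpleGraph.mem_edgeSet, ← horient f]
      refine ⟨f.2, ?_⟩
      simp only [Set.mem_singleton_iff]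
      exact fun h => hef (Subtype.ext h.symm)
    exact ⟨fun h => h.trans hadj.reachable, fun h => h.trans hadj.symm.reachable⟩
  have hmem : ∀ v, v ∈ S ↔ Odd (B.filter fun e => R e v).card := by simp [S]
  have hcut : ∀ e, e ∈ B ↔ ¬ ((orient e).1 ∈ S ↔ (orient e).2 ∈ S) := by
    intro f
    rw [hmem, hmem]
    by_cases hf : f ∈ B
    · have h1 : (B.filter fun e => R e (orient f).1) =
          insert f (B.filter fun e => R e (orient f).2) := by
        ext e
        simp only [Finset.mem_filter, Finset.mem_insert]
        by_cases hef : e = f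
        · subst hef; simp [hf, hR1]
        · rw [hR3 e f hef]; simp [hef]
      rw [h1, Finset.card_insert_of_notMem (by simp [hR2]), Nat.odd_add_one]
      simp only [hf, true_iff]
      tauto
    · have h1 : (B.filter fun e => R e (orient f).1) = (B.filter fun e => R e (orient f).2) := by
        ext e
        simp only [Finset.mem_filter]
        by_cases hef : e = f
        · subst hef; simp [hf]
        · rw [hR3 e f hef]
      rw [h1]; simp [hf]
  obtain ⟨e, he⟩ := hB
  have hce := (hcut e).1 he
  refine ⟨S, ?_, ?_, hcut⟩
  · rw [Finset.nonempty_iff_ne_empty]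
    intro h; rw [h] at hce; simp at hce
  · intro h; rw [h] at hce; simp at hce

/-- GME negativity of the isotropic pair-entangled state on a tree network:
`N(ρ) = max {0, −Tr(W_E ρ)}`. -/
theorem stmt_15 (d : ℕ) (hd : 2 ≤ d) {V : Type*} [Fintype V] [DecidableEq V]
    (G : SimpleGraph V) [DecidableRel G.Adj]
    (hconn : G.Connected) (hacyc : G.IsAcyclic) (hE : G.edgeSet.Nonempty)
    (orient : ↥G.edgeSet → V × V)
    (horient : ∀ e : ↥G.edgeSet, e.val = s((orient e).1, (orient e).2))
    (p : ℝ) (hp0 : 0 ≤ p) (hp1 : p ≤ 1) :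
    GMEnegNet d ↥G.edgeSet orient (ipen d ↥G.edgeSet p)
      = max 0 (-((WE d ↥G.edgeSet * ipen d ↥G.edgeSet p).trace.re)) := by

  haveI : Nonempty ↥G.edgeSet := hE.to_subtype
  exact aux_core orient hd p hp0 hp1
    (fun S h1 h2 => aux_graph_cut G hconn orient horient S h1 h2)
    (fun B hB => aux_graph_real G hacyc orient horient B hB)
end
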